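/- arXiv:1711.06735 — 2 statements merged into one kernel-verified Lean document; each statement's English description precedes it below -/
import Mathlib

section
/- (Larin's theorem.) A polynomial f(X) = a₀ + a₁X + ⋯ + a_tX^t ∈ ℤ[X] is transitive mod 2ⁿ for every n ≥ 1 if and only if: (i) a₀ ≡ 1 (mod 2); (ii) a₁ ≡ 1 (mod 2); (iii) a₃ + a₅ + a₇ + ⋯ ≡ 2a₂ (mod 4); (iv) a₄ + a₆ + a₈ + ⋯ ≡ a₁ + a₂ − 1 (mod 4). -/
open Polynomial

/-- `f` is transitive mod `m`: the induced map on `ZMod m` has a single orbit. -/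
def TransitiveMod (f : ℤ[X]) (m : ℕ) : Prop :=
  ∀ x y : ZMod m, ∃ k : ℕ, (fun z : ZMod m => aeval z f)^[k] x = y

/-- The sum of the odd-indexed coefficients `a₃ + a₅ + a₇ + ⋯` of `f`. -/
noncomputable def oddCoeffSum (f : ℤ[X]) : ℤ :=
  ∑ i ∈ (Finset.range (f.natDegree + 1)).filter (fun i => Odd i ∧ 3 ≤ i), f.coeff i

/-- The sum of the even-indexed coefficients `a₄ + a₆ + a₈ + ⋯` of `f` with index ≥ 4. -/
noncomputable def evenCoeffSumFour (f : ℤ[X]) : ℤ :=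
  ∑ i ∈ (Finset.range (f.natDegree + 1)).filter (fun i => Even i ∧ 4 ≤ i), f.coeff i


/-- Polynomial normal form mod 8. -/
def lg (a b c d e x : ZMod 8) : ZMod 8 := a + x * (b + x * (c + x * (d + x * e)))

lemma pow_odd8 (x : ZMod 8) (k : ℕ) : x ^ (3 + 2 * k) = x ^ 3 := by
  have h5 : ∀ x : ZMod 8, x ^ 5 = x ^ 3 := by decide
  induction k with
  | zero => rfl
  | succ k ih =>
    have : x ^ (3 + 2 * (k + 1)) = x ^ (3 + 2 * k) * x ^ 2 := by ring
    rw [this, ih]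
    calc x ^ 3 * x ^ 2 = x ^ 5 := by ring
      _ = x ^ 3 := h5 x

lemma pow_split8 (x : ZMod 8) (i : ℕ) :
    x ^ i = (if i = 0 then 1 else 0) + (if i = 1 then x else 0) + (if i = 2 then x ^ 2 else 0)
      + (if Odd i ∧ 3 ≤ i then x ^ 3 else 0) + (if Even i ∧ 4 ≤ i then x ^ 4 else 0) := by
  rcases Nat.lt_or_ge i 3 with h | h
  · interval_cases i <;> simp
  · rcases Nat.even_or_odd i with he | ho
    · have h4 : 4 ≤ i := by
        rcases he with ⟨r, hr⟩; omega
      have hno : ¬ Odd i := Nat.not_odd_iff_even.mpr he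
      have e : ∃ k, i = 3 + 2 * k + 1 := by
        rcases he with ⟨r, hr⟩; exact ⟨r - 2, by omega⟩
      rcases e with ⟨k, hk⟩
      have hx : x ^ i = x ^ 4 := by
        rw [hk, pow_succ, pow_odd8]; ring
      simp [hno, he, h4, hx, show i ≠ 0 by omega, show i ≠ 1 by omega, show i ≠ 2 by omega]
    · have hno : ¬ Even i := Nat.not_even_iff_odd.mpr ho
      have e : ∃ k, i = 3 + 2 * k := by
        rcases ho with ⟨r, hr⟩; exact ⟨r - 1, by omega⟩
      rcases e with ⟨k, hk⟩
      have hx : x ^ i = x ^ 3 := by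
        rw [hk, pow_odd8]
      simp [hno, ho, h, hx, show i ≠ 0 by omega, show i ≠ 1 by omega, show i ≠ 2 by omega]

lemma coeff_pick (f : ℤ[X]) (j : ℕ) (y : ZMod 8) :
    ∑ i ∈ Finset.range (f.natDegree + 1), (f.coeff i : ZMod 8) * (if i = j then y else 0)
      = f.coeff j * y := by
  simp only [mul_ite, mul_zero, Finset.sum_ite_eq', Finset.mem_range]
  split_ifs with h
  · rfl
  · rw [Polynomial.coeff_eq_zero_of_natDegree_lt (by omega)]; simp

lemma eval_mod8 (f : ℤ[X]) (x : ℤ) :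
    ((f.eval x : ℤ) : ZMod 8) =
      lg (f.coeff 0) (f.coeff 1) (f.coeff 2) (oddCoeffSum f) (evenCoeffSumFour f) x := by
  rw [Polynomial.eval_eq_sum_range]
  push_cast
  have : ∀ i ∈ Finset.range (f.natDegree + 1), (f.coeff i : ZMod 8) * (x : ZMod 8) ^ i =
     _ := fun i _ => by rw [pow_split8 (x : ZMod 8) i]
  rw [Finset.sum_congr rfl this]
  simp only [mul_add, Finset.sum_add_distrib]
  rw [coeff_pick, coeff_pick, coeff_pick]
  unfold lg oddCoeffSum evenCoeffSumFour
  simp only [mul_ite, mul_zero, Finset.sum_filter]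
  push_cast
  have e : ∀ a b c d e x : ZMod 8, a + x * (b + x * (c + x * (d + x * e))) =
      a * 1 + b * x + c * x ^ 2 + d * x ^ 3 + e * x ^ 4 := by intros; ring
  rw [e]
  simp only [Finset.sum_mul, ite_mul, zero_mul]

/-- The level conditions. -/
def Lev (f : ℤ[X]) (n : ℕ) : Prop :=
  ∀ x : ℤ, ((2 : ℤ) ^ (n + 1)) ∣ ((fun z => f.eval z)^[2 ^ n] x - x - 2 ^ n)

lemma semi (f : ℤ[X]) (m k : ℕ) (x : ℤ) :
    (fun z : ZMod m => aeval z f)^[k] (x : ZMod m)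
      = (((fun z : ℤ => f.eval z)^[k] x : ℤ) : ZMod m) := by
  have h : Function.Semiconj (fun z : ℤ => (z : ZMod m)) (fun z : ℤ => f.eval z)
      (fun z : ZMod m => aeval z f) := by
    intro z
    have := Polynomial.aeval_algebraMap_apply (ZMod m) z f
    simpa using this.symm
  exact ((h.iterate_right k) x).symm

lemma trans_of_lev (f : ℤ[X]) (h : ∀ n, Lev f n) (n : ℕ) : TransitiveMod f (2 ^ n) := by
  have key : ∀ n : ℕ, ∀ x y : ℤ, ∃ k : ℕ, ((2 : ℤ) ^ n) ∣ ((fun z => f.eval z)^[k] x - y) := by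
    intro n
    induction n with
    | zero => intro x y; exact ⟨0, by simp⟩
    | succ n ih =>
      intro x y
      obtain ⟨k, hk⟩ := ih x y
      obtain ⟨c, hc⟩ := hk
      rcases Int.even_or_odd' c with ⟨d, hd | hd⟩
      · exact ⟨k, d, by rw [hc, hd]; ring⟩
      · refine ⟨2 ^ n + k, ?_⟩
        rw [Function.iterate_add_apply]
        obtain ⟨e, he⟩ := h n ((fun z => f.eval z)^[k] x)
        refine ⟨e + d + 1, ?_⟩
        rw [hd] at hc
        have : ∀ a b c P e d : ℤ, a - b - P = 2 * P * e → b - c = P * (2 * d + 1) →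
          a - c = 2 * P * (e + d + 1) := by
          intro a b c P e d h1 h2; linear_combination h1 + h2
        rw [pow_succ, mul_comm _ (2 : ℤ)] at he ⊢
        exact this _ _ _ _ _ _ he hc
  intro x y
  obtain ⟨x, rfl⟩ := ZMod.intCast_surjective x
  obtain ⟨y, rfl⟩ := ZMod.intCast_surjective y
  obtain ⟨k, hk⟩ := key n x y
  refine ⟨k, ?_⟩
  rw [semi]
  have h2 : (((2 ^ n : ℕ) : ℤ)) ∣ ((fun z => f.eval z)^[k] x - y) := by exact_mod_cast hk
  rw [← sub_eq_zero, ← Int.cast_sub, ZMod.intCast_zmod_eq_zero_iff_dvd]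
  exact h2

lemma not_periodic (f : ℤ[X]) (M m : ℕ) [NeZero M] (hm : 0 < m) (hM : m < M)
    (h : TransitiveMod f M) (x : ZMod M) : (fun z : ZMod M => aeval z f)^[m] x ≠ x := by
  intro hp
  have hs : Function.Surjective (fun k : Fin m => (fun z : ZMod M => aeval z f)^[k] x) := by
    intro y
    obtain ⟨k, hk⟩ := h x y
    refine ⟨⟨k % m, Nat.mod_lt _ hm⟩, ?_⟩
    have : Function.IsPeriodicPt (fun z : ZMod M => aeval z f) m x := hp
    rw [← hk]
    exact this.iterate_mod_apply k
  have := Fintype.card_le_of_surjective _ hs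
  rw [ZMod.card, Fintype.card_fin] at this
  omega

lemma lev_of_trans (f : ℤ[X]) (n : ℕ) (h : TransitiveMod f (2 ^ (n + 1)))
    (hn : ∀ x : ℤ, ((2 : ℤ) ^ n) ∣ ((fun z => f.eval z)^[2 ^ n] x - x)) : Lev f n := by
  intro x
  obtain ⟨c, hc⟩ := hn x
  rcases Int.even_or_odd' c with ⟨d, hd | hd⟩
  · exfalso
    refine not_periodic f (2 ^ (n + 1)) (2 ^ n) (by positivity)
      (Nat.pow_lt_pow_right (by norm_num) (by omega)) h (x : ZMod _) ?_
    rw [semi, ← sub_eq_zero, ← Int.cast_sub, ZMod.intCast_zmod_eq_zero_iff_dvd]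
    refine ⟨d, ?_⟩
    rw [hc, hd]; push_cast; ring
  · exact ⟨d, by rw [hc, hd]; ring⟩

lemma lev_next (f : ℤ[X]) (n : ℕ) (h : Lev f n) :
    ∀ x : ℤ, ((2 : ℤ) ^ (n + 1)) ∣ ((fun z => f.eval z)^[2 ^ (n + 1)] x - x) := by
  intro x
  rw [show 2 ^ (n + 1) = 2 ^ n + 2 ^ n by ring, Function.iterate_add_apply]
  obtain ⟨c, hc⟩ := h x
  obtain ⟨d, hd⟩ := h ((fun z => f.eval z)^[2 ^ n] x)
  refine ⟨c + d + 1, ?_⟩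
  linear_combination hc + hd

/-- Taylor to first order. -/
lemma taylor1 (P : ℤ[X]) (x h : ℤ) :
    ∃ k : ℤ, P.eval (x + h) = P.eval x + P.derivative.eval x * h + k * h ^ 2 := by
  have := P.binomExpansion x h
  exact ⟨this.1, this.2⟩

lemma deriv2_even (P : ℤ[X]) (x : ℤ) : (2 : ℤ) ∣ (derivative (derivative P)).eval x := by
  have := Polynomial.factorial_smul_hasseDeriv (R := ℤ) (k := 2)
  have h2 := congrFun this P
  simp only [Function.iterate_succ, Function.iterate_zero, Function.comp] at h2
  refine ⟨(hasseDeriv 2 P).eval x, ?_⟩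
  have h3 : derivative (derivative P) = (2 : ℕ) • hasseDeriv 2 P := by simpa using h2.symm
  rw [h3]; simp

lemma deriv_mod4 (P : ℤ[X]) (x t : ℤ) :
    (4 : ℤ) ∣ P.derivative.eval (x + 2 * t) - P.derivative.eval x := by
  obtain ⟨k, hk⟩ := taylor1 P.derivative x (2 * t)
  obtain ⟨c, hc⟩ := deriv2_even P x
  rw [hk, hc]
  exact ⟨c * t + k * t ^ 2, by ring⟩

lemma odd_deriv (f : ℤ[X]) (h1 : Lev f 1) (x : ℤ) : Odd (f.derivative.eval x) := by
  by_contra hne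
  rw [Int.not_odd_iff_even] at hne
  obtain ⟨r, hr⟩ := hne
  obtain ⟨k, hk⟩ := taylor1 f x 2
  have hd : f.eval (x + 2) = f.eval x + 4 * (r + k) := by rw [hk, hr]; ring
  have e1 := h1 x
  have e2 := h1 (x + 2)
  simp only [Function.iterate_succ, Function.iterate_zero, Function.comp, id, pow_one] at e1 e2
  rw [hd] at e2
  have := Polynomial.sub_dvd_eval_sub (f.eval x + 4 * (r + k)) (f.eval x) f
  obtain ⟨s, hs⟩ := this
  have e3 : f.eval (f.eval x + 4 * (r + k)) = f.eval (f.eval x) + 4 * ((r + k) * s) := by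
    linear_combination hs
  rw [e3] at e2
  norm_num at e1 e2
  omega

/-- Iterated compositions of `f` with itself. -/
noncomputable def itP (f : ℤ[X]) : ℕ → ℤ[X]
  | 0 => f
  | n + 1 => (itP f n).comp (itP f n)

lemma itP_eval (f : ℤ[X]) (n : ℕ) (x : ℤ) : (itP f n).eval x = (fun z => f.eval z)^[2 ^ n] x := by
  induction n generalizing x with
  | zero => simp [itP]
  | succ n ih =>
    rw [show 2 ^ (n + 1) = 2 ^ n + 2 ^ n by ring, Function.iterate_add_apply, ← ih, ← ih, itP,
      eval_comp]

lemma itP_deriv (f : ℤ[X]) (n : ℕ) (x : ℤ) : (itP f (n + 1)).derivative.eval x =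
    (itP f n).derivative.eval x * (itP f n).derivative.eval ((itP f n).eval x) := by
  rw [itP, derivative_comp, eval_mul, eval_comp]

lemma lev_step (f : ℤ[X]) (n : ℕ) (hn : 2 ≤ n) (h : Lev f n)
    (hd : ∀ x, (4 : ℤ) ∣ (itP f n).derivative.eval x - 1) :
    Lev f (n + 1) ∧ ∀ x, (4 : ℤ) ∣ (itP f (n + 1)).derivative.eval x - 1 := by
  constructor
  · intro x
    rw [← itP_eval, itP, eval_comp]
    obtain ⟨c, hc⟩ := h x
    rw [← itP_eval] at hc
    obtain ⟨m, rfl⟩ := Nat.exists_eq_add_of_le hn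
    obtain ⟨k, hk⟩ := taylor1 (itP f (2 + m)) x (2 ^ (2 + m) * (2 * c + 1))
    obtain ⟨e, he⟩ := hd x
    have h1 : (itP f (2 + m)).eval x = x + 2 ^ (2 + m) * (2 * c + 1) := by
      linear_combination hc
    have h2 : (itP f (2 + m)).derivative.eval x = 1 + 4 * e := by linear_combination he
    rw [h1, hk, h1, h2]
    refine ⟨c + e * (2 * c + 1) + k * 2 ^ m * (2 * c + 1) ^ 2, ?_⟩
    ring
  · intro x
    rw [itP_deriv]
    obtain ⟨c, hc⟩ := h x
    rw [← itP_eval] at hc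
    obtain ⟨e, he⟩ := hd x
    obtain ⟨e', he'⟩ := hd ((itP f n).eval x)
    have h2 : (itP f n).derivative.eval x = 1 + 4 * e := by linear_combination he
    have h3 : (itP f n).derivative.eval ((itP f n).eval x) = 1 + 4 * e' := by
      linear_combination he'
    rw [h2, h3]
    exact ⟨e + e' + 4 * e * e', by ring⟩

lemma deriv2 (f : ℤ[X]) (h1 : Lev f 1) (x : ℤ) :
    (4 : ℤ) ∣ (itP f 2).derivative.eval x - 1 := by
  rw [itP_deriv]
  obtain ⟨c, hc⟩ := h1 x
  rw [← itP_eval] at hc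
  have hx : (itP f 1).eval x = x + 2 * (1 + 2 * c) := by linear_combination hc
  rw [hx]
  obtain ⟨e, he⟩ := deriv_mod4 (itP f 1) x (1 + 2 * c)
  have ho : Odd ((itP f 1).derivative.eval x) := by
    rw [itP_deriv]
    exact (odd_deriv f h1 _).mul (odd_deriv f h1 _)
  obtain ⟨r, hr⟩ := ho
  have h3 : (itP f 1).derivative.eval (x + 2 * (1 + 2 * c)) = 2 * r + 1 + 4 * e := by
    linear_combination he + hr
  rw [h3, hr]
  exact ⟨r ^ 2 + r + e * (2 * r + 1), by ring⟩

lemma lev_all (f : ℤ[X]) (h0 : Lev f 0) (h1 : Lev f 1) (h2 : Lev f 2) (n : ℕ) : Lev f n := by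
  have key : ∀ m : ℕ, Lev f (2 + m) ∧ ∀ x, (4 : ℤ) ∣ (itP f (2 + m)).derivative.eval x - 1 := by
    intro m
    induction m with
    | zero => exact ⟨h2, deriv2 f h1⟩
    | succ m ih => exact lev_step f (2 + m) (by omega) ih.1 ih.2
  match n with
  | 0 => exact h0
  | 1 => exact h1
  | n + 2 => rw [add_comm]; exact (key n).1

/-- The level conditions on the normal form. -/
def C0 (a b c d e : ZMod 8) : Prop := ∀ x : ZMod 8, 4 * (lg a b c d e x - x - 1) = 0
/-- Second level. -/
def C1 (a b c d e : ZMod 8) : Prop :=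
  ∀ x : ZMod 8, 2 * (lg a b c d e (lg a b c d e x) - x - 2) = 0
/-- Third level. -/
def C2 (a b c d e : ZMod 8) : Prop := ∀ x : ZMod 8,
  lg a b c d e (lg a b c d e (lg a b c d e (lg a b c d e x))) - x - 4 = 0

/-- Natural-number version of `lg`, reduced mod 8. -/
def ng (a b c d e x : ℕ) : ℕ := (a + x * (b + x * (c + x * (d + x * e)))) % 8

/-- Test that `n` is divisible by 8. -/
def nz (n : ℕ) : Bool := Nat.beq (n % 8) 0

/-- Implication with short circuit. -/
def imp (p q : Bool) : Bool := Bool.rec true q p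

/-- Bounded quantifier over residues mod 8. -/
def allR (p : ℕ → Bool) : Bool :=
  p 0 && (p 1 && (p 2 && (p 3 && (p 4 && (p 5 && (p 6 && p 7))))))

lemma allR_spec {p : ℕ → Bool} (h : allR p = true) (n : ℕ) (hn : n < 8) : p n = true := by
  simp only [allR, Bool.and_eq_true] at h
  obtain ⟨h0, h1, h2, h3, h4, h5, h6, h7⟩ := h
  interval_cases n <;> assumption

lemma imp_spec {p q : Bool} (h : imp p q = true) (hp : p = true) : q = true := by
  subst hp; exact h

lemma nz_iff (n : ℕ) : nz n = true ↔ (n : ZMod 8) = 0 := by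
  rw [ZMod.natCast_eq_zero_iff]
  unfold nz
  rw [Nat.beq_eq]
  exact (Nat.dvd_iff_mod_eq_zero).symm

lemma ng_cast (a b c d e x : ℕ) : ((ng a b c d e x : ℕ) : ZMod 8) = lg a b c d e x := by
  unfold ng lg
  rw [ZMod.natCast_mod]
  push_cast
  rfl

lemma chk_fwd : allR (fun a => imp (nz (4 * (a + 7))) <| allR fun b => allR fun c =>
    allR fun d => allR fun e => imp (nz (4 * (a + b + c + d + e))) <|
    imp (nz (2 * (ng a b c d e a + 6))) <|
    imp (nz (2 * (ng a b c d e (ng a b c d e 1) + 5))) <|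
    imp (nz (ng a b c d e (ng a b c d e (ng a b c d e a)) + 4)) <|
    (nz (4 * (b + 7)) && (nz (2 * (d + 6 * c)) && nz (2 * (e + 7 * b + 7 * c + 1))))) = true := by
  decide +kernel

lemma chk_bwd : allR (fun a => imp (nz (4 * (a + 7))) <| allR fun b => imp (nz (4 * (b + 7))) <|
    allR fun c => allR fun d => imp (nz (2 * (d + 6 * c))) <|
    allR fun e => imp (nz (2 * (e + 7 * b + 7 * c + 1))) <| allR fun x =>
    (nz (4 * (ng a b c d e x + 7 * x + 7)) &&
    (nz (2 * (ng a b c d e (ng a b c d e x) + 7 * x + 6)) &&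
    nz (ng a b c d e (ng a b c d e (ng a b c d e (ng a b c d e x))) + 7 * x + 4)))) = true := by
  decide +kernel

lemma ex_nat (z : ZMod 8) : ∃ n : ℕ, n < 8 ∧ (n : ZMod 8) = z :=
  ⟨z.val, ZMod.val_lt z, ZMod.natCast_zmod_val z⟩

lemma fin_fwd (a : ZMod 8) (ha : 4 * (a - 1) = 0) (b c d e : ZMod 8)
    (h1 : 4 * (a + b + c + d + e) = 0)
    (h2 : 2 * (lg a b c d e a - 2) = 0)
    (h3 : 2 * (lg a b c d e (lg a b c d e 1) - 3) = 0)
    (h4 : lg a b c d e (lg a b c d e (lg a b c d e a)) = 4) :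
    (4 * (b - 1) = 0 ∧ 2 * (d - 2 * c) = 0 ∧ 2 * (e - (b + c - 1)) = 0) := by
  have e8 : (8 : ZMod 8) = 0 := by decide
  obtain ⟨a, la, rfl⟩ := ex_nat a
  obtain ⟨b, lb, rfl⟩ := ex_nat b
  obtain ⟨c, lc, rfl⟩ := ex_nat c
  obtain ⟨d, ld, rfl⟩ := ex_nat d
  obtain ⟨e, le, rfl⟩ := ex_nat e
  have k := imp_spec (allR_spec chk_fwd a la) ((nz_iff _).2 (by
    push_cast; linear_combination ha + 4 * e8))
  have k := allR_spec (allR_spec (allR_spec (allR_spec k b lb) c lc) d ld) e le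
  have k := imp_spec k ((nz_iff _).2 (by push_cast; linear_combination h1))
  have k := imp_spec k ((nz_iff _).2 (by
    push_cast [ng_cast]; linear_combination h2 + 2 * e8))
  have k := imp_spec k ((nz_iff _).2 (by
    push_cast [ng_cast]; linear_combination h3 + 2 * e8))
  have k := imp_spec k ((nz_iff _).2 (by
    push_cast [ng_cast]; linear_combination h4 + e8))
  simp only [Bool.and_eq_true, nz_iff] at k
  push_cast at k
  obtain ⟨k1, k2, k3⟩ := k
  refine ⟨?_, ?_, ?_⟩
  · linear_combination k1 - 4 * e8
  · linear_combination k2 - 2 * c * e8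
  · linear_combination k3 - 2 * (b + c) * e8

lemma fin_bwd (a : ZMod 8) (ha : 4 * (a - 1) = 0) (b : ZMod 8) (hb : 4 * (b - 1) = 0)
    (c d : ZMod 8) (hd : 2 * (d - 2 * c) = 0) (e : ZMod 8) (he : 2 * (e - (b + c - 1)) = 0)
    (x : ZMod 8) : 4 * (lg a b c d e x - x - 1) = 0 ∧
      2 * (lg a b c d e (lg a b c d e x) - x - 2) = 0 ∧
      lg a b c d e (lg a b c d e (lg a b c d e (lg a b c d e x))) - x - 4 = 0 := by
  have e8 : (8 : ZMod 8) = 0 := by decide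
  obtain ⟨a, la, rfl⟩ := ex_nat a
  obtain ⟨b, lb, rfl⟩ := ex_nat b
  obtain ⟨c, lc, rfl⟩ := ex_nat c
  obtain ⟨d, ld, rfl⟩ := ex_nat d
  obtain ⟨e, le, rfl⟩ := ex_nat e
  obtain ⟨x, lx, rfl⟩ := ex_nat x
  have k := imp_spec (allR_spec chk_bwd a la) ((nz_iff _).2 (by
    push_cast; linear_combination ha + 4 * e8))
  have k := imp_spec (allR_spec k b lb) ((nz_iff _).2 (by
    push_cast; linear_combination hb + 4 * e8))
  have k := imp_spec (allR_spec (allR_spec k c lc) d ld) ((nz_iff _).2 (by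
    push_cast; linear_combination hd + 2 * c * e8))
  have k := imp_spec (allR_spec k e le) ((nz_iff _).2 (by
    push_cast; linear_combination he + 2 * (b + c) * e8))
  have k := allR_spec k x lx
  simp only [Bool.and_eq_true, nz_iff] at k
  push_cast [ng_cast] at k
  obtain ⟨k1, k2, k3⟩ := k
  refine ⟨?_, ?_, ?_⟩
  · linear_combination k1 - 4 * (x + 1) * e8
  · linear_combination k2 - 2 * (x + 1) * e8
  · linear_combination k3 - (x + 1) * e8

lemma fin_check (a b c d e : ZMod 8) :
    (C0 a b c d e ∧ C1 a b c d e ∧ C2 a b c d e) ↔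
    (4 * (a - 1) = 0 ∧ 4 * (b - 1) = 0 ∧ 2 * (d - 2 * c) = 0 ∧ 2 * (e - (b + c - 1)) = 0) := by
  constructor
  · rintro ⟨h0, h1, h2⟩
    have g0 : lg a b c d e 0 = a := by simp [lg]
    have g1 : lg a b c d e 1 = a + b + c + d + e := by unfold lg; ring
    have p0 := h0 0
    have p1 := h0 1
    have q0 := h1 0
    have q1 := h1 1
    have r0 := h2 0
    rw [g0] at p0 q0 r0
    rw [g1] at p1
    have e8 : (8 : ZMod 8) = 0 := by decide
    have pa : 4 * (a - 1) = 0 := by linear_combination p0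
    refine ⟨pa, fin_fwd a pa b c d e ?_ ?_ ?_ ?_⟩
    · linear_combination p1 + e8
    · linear_combination q0
    · linear_combination q1
    · linear_combination r0
  · rintro ⟨ha, hb, hd, he⟩
    have := fin_bwd a ha b hb c d hd e he
    exact ⟨fun x => (this x).1, fun x => (this x).2.1, fun x => (this x).2.2⟩

lemma z8 (a : ℤ) : (a : ZMod 8) = 0 ↔ (8 : ℤ) ∣ a := by
  exact_mod_cast ZMod.intCast_zmod_eq_zero_iff_dvd a 8

lemma all_z8 (p : ZMod 8 → Prop) : (∀ x, p x) ↔ ∀ x : ℤ, p (x : ZMod 8) :=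
  ⟨fun h x => h _, fun h x => by
    obtain ⟨x, rfl⟩ := ZMod.intCast_surjective x
    exact h x⟩

lemma lev_iff (f : ℤ[X]) :
    (C0 (f.coeff 0) (f.coeff 1) (f.coeff 2) (oddCoeffSum f) (evenCoeffSumFour f) ∧
     C1 (f.coeff 0) (f.coeff 1) (f.coeff 2) (oddCoeffSum f) (evenCoeffSumFour f) ∧
     C2 (f.coeff 0) (f.coeff 1) (f.coeff 2) (oddCoeffSum f) (evenCoeffSumFour f)) ↔
    (Lev f 0 ∧ Lev f 1 ∧ Lev f 2) := by
  unfold C0 C1 C2 Lev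
  rw [all_z8, all_z8, all_z8]
  simp only [← eval_mod8]
  refine and_congr (forall_congr' fun x => ?_) (and_congr (forall_congr' fun x => ?_)
    (forall_congr' fun x => ?_))
  · have h := z8 (4 * (f.eval x - x - 1))
    push_cast at h
    rw [h]
    simp
    omega
  · have h := z8 (2 * (f.eval (f.eval x) - x - 2))
    push_cast at h
    rw [h]
    simp
    omega
  · have h := z8 (f.eval (f.eval (f.eval (f.eval x))) - x - 4)
    push_cast at h
    rw [h]
    simp

lemma cond_iff (f : ℤ[X]) :
    (f.coeff 0 ≡ 1 [ZMOD 2] ∧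
       f.coeff 1 ≡ 1 [ZMOD 2] ∧
       oddCoeffSum f ≡ 2 * f.coeff 2 [ZMOD 4] ∧
       evenCoeffSumFour f ≡ f.coeff 1 + f.coeff 2 - 1 [ZMOD 4]) ↔
    (4 * ((f.coeff 0 : ZMod 8) - 1) = 0 ∧ 4 * ((f.coeff 1 : ZMod 8) - 1) = 0 ∧
      2 * ((oddCoeffSum f : ZMod 8) - 2 * f.coeff 2) = 0 ∧
      2 * ((evenCoeffSumFour f : ZMod 8) - (f.coeff 1 + f.coeff 2 - 1)) = 0) := by
  have h1 := z8 (4 * (f.coeff 0 - 1))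
  have h2 := z8 (4 * (f.coeff 1 - 1))
  have h3 := z8 (2 * (oddCoeffSum f - 2 * f.coeff 2))
  have h4 := z8 (2 * (evenCoeffSumFour f - (f.coeff 1 + f.coeff 2 - 1)))
  push_cast at h1 h2 h3 h4
  rw [h1, h2, h3, h4]
  unfold Int.ModEq
  refine and_congr ?_ (and_congr ?_ (and_congr ?_ ?_)) <;> omega

/-- Larin's theorem: `f = a₀ + a₁ X + ⋯ + a_t X^t ∈ ℤ[X]` is transitive mod `2 ^ n` for
every `n ≥ 1` if and only if `a₀ ≡ 1 (mod 2)`, `a₁ ≡ 1 (mod 2)`,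
`a₃ + a₅ + a₇ + ⋯ ≡ 2 a₂ (mod 4)`, and `a₄ + a₆ + a₈ + ⋯ ≡ a₁ + a₂ - 1 (mod 4)`. -/
theorem larin_transitivity (f : ℤ[X]) :
    (∀ n : ℕ, 1 ≤ n → TransitiveMod f (2 ^ n)) ↔
      (f.coeff 0 ≡ 1 [ZMOD 2] ∧
       f.coeff 1 ≡ 1 [ZMOD 2] ∧
       oddCoeffSum f ≡ 2 * f.coeff 2 [ZMOD 4] ∧
       evenCoeffSumFour f ≡ f.coeff 1 + f.coeff 2 - 1 [ZMOD 4]) := by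
  rw [cond_iff, ← fin_check, lev_iff]
  constructor
  · intro h
    have h0 : Lev f 0 := lev_of_trans f 0 (h 1 (by norm_num)) (by simp)
    have h1 : Lev f 1 := lev_of_trans f 1 (h 2 (by norm_num)) (lev_next f 0 h0)
    have h2 : Lev f 2 := lev_of_trans f 2 (h 3 (by norm_num)) (lev_next f 1 h1)
    exact ⟨h0, h1, h2⟩
  · rintro ⟨h0, h1, h2⟩ n _
    exact trans_of_lev f (lev_all f h0 h1 h2) n
end

section
/- Let f(X) = a₀ + a₁X + ⋯ + a_tX^t ∈ ℤ[X] and let F : ℤ₂ → ℤ₂ denote the induced evaluation map on the ring ℤ₂ of 2-adic integers. Then the dynamical system (ℤ₂, F) is minimal — i.e., for every z ∈ ℤ₂ the forward orbit {F^[k](z) : k ≥ 0} is dense in ℤ₂ — if and only if: (i) a₀ ≡ 1 (mod 2); (ii) a₁ ≡ 1 (mod 2); (iii) a₃ + a₅ + a₇ + ⋯ ≡ 2a₂ (mod 4); (iv) a₄ + a₆ + a₈ + ⋯ ≡ a₁ + a₂ − 1 (mod 4). -/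
open Polynomial

/-- Values at even and odd points modulo `8`. -/
lemma eval_mod8_s16 (f : ℤ[X]) : ∃ E O : ℤ, oddCoeffSum f = O ∧ evenCoeffSumFour f = E ∧
    (∀ y : ℤ, (8 : ℤ) ∣ f.eval (2 * y) - (f.coeff 0 + 2 * (f.coeff 1 * y) + 4 * (f.coeff 2 * y ^ 2))) ∧
    (∀ y : ℤ, (8 : ℤ) ∣ f.eval (2 * y + 1) -
      ((f.coeff 0 + f.coeff 2 + E) + (f.coeff 1 + O) * (2 * y + 1))) := by
  have hN : ∀ i, i ∉ Finset.range (f.natDegree + 1) → f.coeff i = 0 := by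
    intro i hi
    apply coeff_eq_zero_of_natDegree_lt
    simp at hi; omega
  have hO : oddCoeffSum f = ∑ i ∈ Finset.range f.natDegree,
      if Odd (i + 3) then f.coeff (i + 3) else 0 := by
    unfold oddCoeffSum
    rw [Finset.sum_filter]
    rw [Finset.sum_subset (Finset.range_mono (show f.natDegree + 1 ≤ f.natDegree + 3 by omega))
      (fun i _ hi => by simp [hN i hi])]
    rw [Finset.sum_range_succ', Finset.sum_range_succ', Finset.sum_range_succ']
    simp
  have hE : evenCoeffSumFour f = ∑ i ∈ Finset.range f.natDegree,
      if Even (i + 3) then f.coeff (i + 3) else 0 := by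
    unfold evenCoeffSumFour
    rw [Finset.sum_filter]
    rw [Finset.sum_subset (Finset.range_mono (show f.natDegree + 1 ≤ f.natDegree + 3 by omega))
      (fun i _ hi => by simp [hN i hi])]
    rw [Finset.sum_range_succ', Finset.sum_range_succ', Finset.sum_range_succ']
    simp only [zero_add, Nat.reduceAdd]
    norm_num
    apply Finset.sum_congr rfl
    intro i _
    rcases i with _ | i
    · have h3 : ¬ Even 3 := by decide
      simp [h3]
    · simp
  have hev : ∀ x : ℤ, f.eval x = (∑ i ∈ Finset.range f.natDegree, f.coeff (i + 3) * x ^ (i + 3))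
      + f.coeff 2 * x ^ 2 + f.coeff 1 * x + f.coeff 0 := by
    intro x
    rw [eval_eq_sum_range' (show f.natDegree < f.natDegree + 3 by omega)]
    rw [Finset.sum_range_succ', Finset.sum_range_succ', Finset.sum_range_succ']
    simp
  refine ⟨_, _, rfl, rfl, ?_, ?_⟩
  · intro y
    rw [hev]
    have : (8 : ℤ) ∣ ∑ i ∈ Finset.range f.natDegree, f.coeff (i + 3) * (2 * y) ^ (i + 3) := by
      apply Finset.dvd_sum
      intro i _
      exact ⟨f.coeff (i + 3) * (2 * y) ^ i * y ^ 3, by ring⟩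
    obtain ⟨k, hk⟩ := this
    exact ⟨k, by rw [hk]; ring⟩
  · intro y
    rw [hev, hO, hE]
    have hsq : (8 : ℤ) ∣ (2 * y + 1) ^ 2 - 1 := by
      rcases Int.even_or_odd' y with ⟨m, rfl | rfl⟩
      · exact ⟨2 * m ^ 2 + m, by ring⟩
      · exact ⟨2 * m ^ 2 + 3 * m + 1, by ring⟩
    have hpow : ∀ j : ℕ, (8 : ℤ) ∣ ((2 * y + 1) ^ 2) ^ j - 1 := fun j =>
      hsq.trans (by
        have := sub_dvd_pow_sub_pow ((2 * y + 1) ^ 2) 1 j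
        rwa [one_pow] at this)
    have : (8 : ℤ) ∣ ∑ i ∈ Finset.range f.natDegree, (f.coeff (i + 3) * (2 * y + 1) ^ (i + 3)
        - ((if Even (i + 3) then f.coeff (i + 3) else 0) +
          (if Odd (i + 3) then f.coeff (i + 3) else 0) * (2 * y + 1))) := by
      apply Finset.dvd_sum
      intro i _
      rcases Nat.even_or_odd (i + 3) with h | h
      · have h' : ¬ Odd (i + 3) := by simpa using h
        rw [if_pos h, if_neg h']
        obtain ⟨j, hj⟩ := h
        obtain ⟨k, hk⟩ := hpow j
        rw [show (2 * y + 1) ^ (i + 3) = ((2 * y + 1) ^ 2) ^ j by rw [← pow_mul, hj, ← two_mul j]]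
        exact ⟨f.coeff (i + 3) * k, by linear_combination f.coeff (i + 3) * hk⟩
      · have h' : ¬ Even (i + 3) := by simpa using h
        rw [if_neg h', if_pos h]
        obtain ⟨j, hj⟩ := h
        obtain ⟨k, hk⟩ := hpow j
        rw [show (2 * y + 1) ^ (i + 3) = ((2 * y + 1) ^ 2) ^ j * (2 * y + 1) by
          rw [← pow_mul, hj, pow_succ]]
        exact ⟨f.coeff (i + 3) * k * (2 * y + 1),
          by linear_combination f.coeff (i + 3) * (2 * y + 1) * hk⟩
    rw [Finset.sum_sub_distrib, Finset.sum_add_distrib, ← Finset.sum_mul] at this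
    have h4 : (8 : ℤ) ∣ f.coeff 2 * ((2 * y + 1) ^ 2 - 1) := Dvd.dvd.mul_left hsq _
    have := dvd_add this h4
    refine this.trans (dvd_of_eq ?_)
    ring

/-- The arithmetic core: Larin's conditions in terms of the orbit of `0` modulo `8`. -/
lemma arith_core (a0 a1 a2 E O c1 c2 c3 c4 : ℤ) (h1 : c1 = a0)
    (hodd : ∃ p, a0 = 2 * p + 1)
    (h2 : (8 : ℤ) ∣ c2 - ((a0 + a2 + E) + (a1 + O) * a0))
    (h3 : ∀ c, c2 = 2 * c → (8 : ℤ) ∣ c3 - (a0 + 2 * (a1 * c) + 4 * (a2 * c ^ 2)))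
    (h4 : (∃ p, c3 = 2 * p + 1) → (8 : ℤ) ∣ c4 - ((a0 + a2 + E) + (a1 + O) * c3)) :
    (c2 % 4 = 2 ∧ c4 % 8 = 4) ↔
     (a1 % 2 = 1 ∧ (O - 2 * a2) % 4 = 0 ∧ (E - (a1 + a2 - 1)) % 4 = 0) := by
  obtain ⟨p, rfl⟩ := hodd
  have key : ∀ m, c2 = 2 * (2 * m + 1) → (8 : ℤ) ∣ c4 - 2 * (2 * m + 1) *
      (1 + a1 * (a1 + O) + 2 * (a2 * (a1 + O) * (2 * m + 1))) := by
    intro m hm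
    obtain ⟨k3, hk3⟩ := h3 _ hm
    obtain ⟨k4, hk4⟩ := h4 ⟨p + a1 * (2 * m + 1) + 2 * (a2 * (2 * m + 1) ^ 2) + 4 * k3, by linarith⟩
    obtain ⟨k2, hk2⟩ := h2
    exact ⟨k4 - k2 + (a1 + O) * k3, by linear_combination hk4 - hk2 + (a1 + O) * hk3 + hm⟩
  constructor
  · rintro ⟨h22, h44⟩
    obtain ⟨m, hm⟩ : ∃ m, c2 = 2 * (2 * m + 1) := ⟨c2 / 4, by omega⟩
    obtain ⟨k, hk⟩ := key m hm
    have hd : (1 + a1 * (a1 + O)) % 2 = 0 := by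
      have : (1 + a1 * (a1 + O)) + 2 * (m * (1 + a1 * (a1 + O))
        + (a2 * (a1 + O) * (2 * m + 1)) * (2 * m + 1)) = c4 / 2 - 4 * k := by
        have : c4 = 2 * (c4 / 2) := by omega
        linarith
      omega
    have hodd : Odd (a1 * (a1 + O)) := by rw [Int.odd_iff]; omega
    rw [Int.odd_mul] at hodd
    obtain ⟨⟨s, hs⟩, ⟨t, ht⟩⟩ := hodd
    have hOe : O = 2 * t - 2 * s := by linarith
    subst hOe hs
    obtain ⟨k2, hk2⟩ := h2
    have hW : Odd ((2 * m + 1) * (1 + 2 * (s * t) + s + t + a2 * (2 * t + 1) * (2 * m + 1))) := by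
      have : c4 = 4 * ((2 * m + 1) * (1 + 2 * (s * t) + s + t + a2 * (2 * t + 1) * (2 * m + 1)))
          + 8 * k := by
        linear_combination hk + 2 * (2 * m + 1) * ((2 * s + 1) + 2 * a2 * (2 * m + 1)) * ht
      rw [Int.odd_iff]; omega
    have hO : Even (s + t + a2) := by
      revert hW
      rw [← Int.not_even_iff_odd]
      simp only [Int.even_add, Int.even_mul, even_two, Int.not_even_one, true_or]
      tauto
    obtain ⟨r, hr⟩ := hO
    have hA : c2 = 2 * p + 1 + a2 + E + (2 * t + 1) * (2 * p + 1) + 8 * k2 := by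
      linear_combination hk2
    have hA' : 2 + 4 * m = 2 + 2 * t + a2 + E + 4 * (p + t * p + 2 * k2) := by
      linear_combination hA - hm
    refine ⟨by omega, by omega, by omega⟩
  · rintro ⟨ha, hO, hE⟩
    obtain ⟨s, rfl⟩ : ∃ s, a1 = 2 * s + 1 := ⟨a1 / 2, by omega⟩
    obtain ⟨q, rfl⟩ : ∃ q, O = 2 * a2 + 4 * q := ⟨(O - 2 * a2) / 4, by omega⟩
    obtain ⟨r, rfl⟩ : ∃ r, E = 2 * s + a2 + 4 * r :=
      ⟨(E - (2 * s + 1 + a2 - 1)) / 4, by omega⟩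
    obtain ⟨k2, hk2⟩ := h2
    obtain ⟨m, hm⟩ : ∃ m, c2 = 2 * (2 * m + 1) := ⟨p + a2 + s + q + r + s * p + a2 * p
      + 2 * q * p + 2 * k2, by linear_combination hk2⟩
    obtain ⟨k, hk⟩ := key m hm
    have hW : Odd ((2 * m + 1) * (1 + 2 * (s * (s + a2 + 2 * q)) + s + (s + a2 + 2 * q)
        + a2 * (2 * (s + a2 + 2 * q) + 1) * (2 * m + 1))) := by
      rw [← Int.not_even_iff_odd]
      simp only [Int.even_add, Int.even_mul, even_two, Int.not_even_one, true_or]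
      tauto
    have : c4 = 4 * ((2 * m + 1) * (1 + 2 * (s * (s + a2 + 2 * q)) + s + (s + a2 + 2 * q)
        + a2 * (2 * (s + a2 + 2 * q) + 1) * (2 * m + 1))) + 8 * k := by
      linear_combination hk
    rw [Int.odd_iff] at hW
    omega

lemma iter_congr (f : ℤ[X]) (N a b : ℤ) (h : N ∣ a - b) (k : ℕ) :
    N ∣ (fun x => f.eval x)^[k] a - (fun x => f.eval x)^[k] b := by
  induction k with
  | zero => simpa using h
  | succ k ih =>
    rw [Function.iterate_succ_apply', Function.iterate_succ_apply']
    exact ih.trans (sub_dvd_eval_sub _ _ f)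

lemma forward_core (c : ℕ → ℤ) (h0 : c 0 = 0)
    (hc : ∀ N : ℤ, ∀ m j, N ∣ c m - c j → ∀ k, N ∣ c (m + k) - c (j + k))
    (hit : ∀ w : ℤ, ∃ k, (8 : ℤ) ∣ c k - w) :
    c 1 % 2 = 1 ∧ c 2 % 4 = 2 ∧ c 4 % 8 = 4 := by
  have H1 : c 1 % 2 = 1 := by
    by_contra hcon
    have hp := hc 2 1 0 (by omega)
    have hall : ∀ k, c k % 2 = 0 := by
      intro k
      induction k with
      | zero => omega
      | succ k ih => have := hp k; rw [zero_add, add_comm 1 k] at this; omega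
    obtain ⟨k, hk⟩ := hit 1
    have := hall k
    omega
  have H2 : c 2 % 2 = 0 := by
    by_contra hcon
    have hp := hc 2 2 1 (by omega)
    have hall : ∀ k, c (k + 1) % 2 = 1 := by
      intro k
      induction k with
      | zero => simpa using H1
      | succ k ih => have := hp k; rw [add_comm 2 k, add_comm 1 k] at this; change c (k + 2) % 2 = 1; omega
    obtain ⟨k, hk⟩ := hit 2
    rcases k with _ | k
    · omega
    · have := hall k
      omega
  have H22 : c 2 % 4 = 2 := by
    by_contra hcon
    have hp := hc 4 2 0 (by omega)
    have hall : ∀ k, c k % 4 ≠ 2 ∧ c (k + 1) % 4 ≠ 2 := by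
      intro k
      induction k with
      | zero => constructor <;> simp <;> omega
      | succ k ih =>
        refine ⟨ih.2, ?_⟩
        have := hp k
        rw [zero_add, add_comm 2 k] at this
        have e : k + 1 + 1 = k + 2 := rfl
        rw [e]
        omega
    obtain ⟨k, hk⟩ := hit 2
    have := (hall k).1
    omega
  have hp2 := hc 2 2 0 (by omega)
  have H3 : c 3 % 2 = 1 := by have : (2 : ℤ) ∣ c 3 - c 1 := hp2 1; omega
  have H4 : c 4 % 2 = 0 := by have : (2 : ℤ) ∣ c 4 - c 2 := hp2 2; omega
  have H44 : c 4 % 4 = 0 := by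
    by_contra hcon
    have hp := hc 4 4 2 (by omega)
    have hp' : ∀ k, (4 : ℤ) ∣ c (k + 4) - c (k + 2) := by
      intro k; rw [add_comm k 4, add_comm k 2]; exact hp k
    have hall : ∀ k, c (k + 2) % 4 ≠ 0 ∧ c (k + 3) % 4 ≠ 0 := by
      intro k
      induction k with
      | zero => constructor <;> simp <;> omega
      | succ k ih =>
        have := hp' k
        have e : k + 1 + 3 = k + 4 := rfl
        have e' : k + 1 + 2 = k + 3 := rfl
        rw [e, e']
        omega
    obtain ⟨k, hk⟩ := hit 4
    rcases k with _ | _ | k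
    · omega
    · simp at hk; omega
    · have := (hall k).1
      have e : k + 1 + 1 = k + 2 := rfl
      rw [e] at hk
      omega
  refine ⟨H1, H22, ?_⟩
  by_contra hcon
  have hp := hc 8 4 0 (by omega)
  have hp' : ∀ k, (8 : ℤ) ∣ c (k + 4) - c k := by
    intro k; have := hp k; rwa [add_comm 4 k, zero_add] at this
  have hall : ∀ k, c k % 8 ≠ 4 ∧ c (k + 1) % 8 ≠ 4 ∧ c (k + 2) % 8 ≠ 4 ∧ c (k + 3) % 8 ≠ 4 := by
    intro k
    induction k with
    | zero => simp; omega
    | succ k ih =>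
      have := hp' k
      have e : k + 1 + 3 = k + 4 := rfl
      have e' : k + 1 + 2 = k + 3 := rfl
      have e'' : k + 1 + 1 = k + 2 := rfl
      rw [e, e', e'']
      omega
  obtain ⟨k, hk⟩ := hit 4
  have := (hall k).1
  omega

/-- Iterated self-composition: `compPow f n` is the `2^n`-th iterate of `f`. -/
noncomputable def compPow (f : ℤ[X]) : ℕ → ℤ[X]
  | 0 => f
  | n + 1 => (compPow f n).comp (compPow f n)

lemma compPow_eval (f : ℤ[X]) (n : ℕ) (x : ℤ) :
    (compPow f n).eval x = (fun x => f.eval x)^[2 ^ n] x := by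
  induction n generalizing x with
  | zero => simp [compPow]
  | succ n ih =>
    rw [compPow, eval_comp, ih, ih, ← Function.iterate_add_apply, pow_succ, mul_two]

lemma deriv_deriv_even (p : ℤ[X]) (x : ℤ) : (2 : ℤ) ∣ (derivative (derivative p)).eval x := by
  have h := congrFun (factorial_smul_hasseDeriv (R := ℤ) 2) p
  have h2 : derivative (derivative p) = (2 : ℕ) • hasseDeriv 2 p := by
    simpa using h.symm
  rw [h2]
  exact ⟨(hasseDeriv 2 p).eval x, by simp⟩

lemma deriv_mod4_s16 (p : ℤ[X]) (x y : ℤ) :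
    (4 : ℤ) ∣ (derivative p).eval (x + 2 * y) - (derivative p).eval x := by
  obtain ⟨k, hk⟩ := binomExpansion (derivative p) x (2 * y)
  obtain ⟨d, hd⟩ := deriv_deriv_even p x
  rw [hk, hd]
  exact ⟨d * y + k * y ^ 2, by ring⟩

lemma compPow_zero (f : ℤ[X]) (hder : ∀ x, (derivative f).eval x % 2 = 1)
    (h0 : (compPow f 0).eval 0 % 2 = 1) (h1 : (compPow f 1).eval 0 % 4 = 2)
    (h2 : (compPow f 2).eval 0 % 8 = 4) (n : ℕ) :
    ∃ u : ℤ, (compPow f n).eval 0 = 2 ^ n * (2 * u + 1) := by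
  have step : ∀ n, (compPow f n).eval 0 % 2 = 0 → (derivative (compPow f n)).eval 0 % 2 = 1 →
      (derivative (compPow f (n + 1))).eval 0 % 4 = 1 := by
    intro n he ho
    rw [compPow, derivative_comp, eval_mul, eval_comp]
    obtain ⟨y, hy⟩ : ∃ y, (compPow f n).eval 0 = 0 + 2 * y := ⟨(compPow f n).eval 0 / 2, by omega⟩
    rw [hy]
    obtain ⟨k, hk⟩ := deriv_mod4_s16 (compPow f n) 0 y
    generalize (derivative (compPow f n)).eval 0 = D at *
    generalize (derivative (compPow f n)).eval (0 + 2 * y) = D' at *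
    obtain ⟨e, rfl⟩ : ∃ e, D = 2 * e + 1 := ⟨D / 2, by omega⟩
    have : (2 * e + 1) * D' = 1 + 4 * (e ^ 2 + e + (2 * e + 1) * k) := by
      linear_combination (2 * e + 1) * hk
    omega
  have d1 : (derivative (compPow f 1)).eval 0 % 2 = 1 := by
    simp only [compPow]
    rw [derivative_comp, eval_mul, eval_comp]
    have a := hder 0
    have b := hder (f.eval 0)
    rw [← Int.odd_iff] at *
    exact a.mul b
  have main : ∀ n, (∃ u : ℤ, (compPow f (n + 2)).eval 0 = 2 ^ (n + 2) * (2 * u + 1)) ∧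
      (derivative (compPow f (n + 2))).eval 0 % 4 = 1 := by
    intro n
    induction n with
    | zero =>
      refine ⟨⟨(compPow f 2).eval 0 / 8, ?_⟩, step 1 (by omega) d1⟩
      norm_num
      omega
    | succ n ih =>
      obtain ⟨⟨u, hu⟩, hd⟩ := ih
      refine ⟨?_, step (n + 2) ?_ (by omega)⟩
      · have e : n + 1 + 2 = (n + 2) + 1 := rfl
        rw [e, compPow, eval_comp]
        obtain ⟨k, hk⟩ := binomExpansion (compPow f (n + 2)) 0 ((compPow f (n + 2)).eval 0)
        rw [zero_add] at hk
        rw [hk]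
        obtain ⟨d, hd'⟩ : ∃ d, (derivative (compPow f (n + 2))).eval 0 = 4 * d + 1 :=
          ⟨(derivative (compPow f (n + 2))).eval 0 / 4, by omega⟩
        rw [hd', hu]
        exact ⟨2 * d * u + d + u + k * 2 ^ n * (2 * u + 1) ^ 2, by ring⟩
      · rw [hu, pow_succ, mul_assoc, mul_left_comm]
        omega
  rcases n with _ | _ | n
  · exact ⟨(compPow f 0).eval 0 / 2, by norm_num; omega⟩
  · exact ⟨(compPow f 1).eval 0 / 4, by norm_num; omega⟩
  · exact (main n).1

lemma separation (f : ℤ[X]) (hder : ∀ x, (derivative f).eval x % 2 = 1)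
    (h0 : f.eval 0 % 2 = 1) (h1 : f.eval 1 % 2 = 0) (n : ℕ) (x y u : ℤ)
    (h : x = y + 2 ^ n * (2 * u + 1)) : ∃ v, f.eval x = f.eval y + 2 ^ n * (2 * v + 1) := by
  rcases n with _ | n
  · have hx : f.eval x % 2 = (x + 1) % 2 := by
      rcases Int.emod_two_eq_zero_or_one x with hx | hx
      · have := (show (2 : ℤ) ∣ x - 0 by omega).trans (sub_dvd_eval_sub x 0 f)
        omega
      · have := (show (2 : ℤ) ∣ x - 1 by omega).trans (sub_dvd_eval_sub x 1 f)
        omega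
    have hy : f.eval y % 2 = (y + 1) % 2 := by
      rcases Int.emod_two_eq_zero_or_one y with hx | hx
      · have := (show (2 : ℤ) ∣ y - 0 by omega).trans (sub_dvd_eval_sub y 0 f)
        omega
      · have := (show (2 : ℤ) ∣ y - 1 by omega).trans (sub_dvd_eval_sub y 1 f)
        omega
    refine ⟨(f.eval x - f.eval y) / 2, ?_⟩
    rw [pow_zero] at *
    omega
  · obtain ⟨k, hk⟩ := binomExpansion f y (2 ^ (n + 1) * (2 * u + 1))
    obtain ⟨d, hd⟩ : ∃ d, (derivative f).eval y = 2 * d + 1 :=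
      ⟨(derivative f).eval y / 2, by have := hder y; omega⟩
    rw [h, hk, hd]
    exact ⟨2 * d * u + d + u + k * 2 ^ n * (2 * u + 1) ^ 2, by ring⟩

lemma all_hit (f : ℤ[X]) (hder : ∀ x, (derivative f).eval x % 2 = 1)
    (h0 : f.eval 0 % 2 = 1) (h1 : f.eval 1 % 2 = 0)
    (hg : ∀ n, ∃ u : ℤ, (fun x => f.eval x)^[2 ^ n] 0 = 2 ^ n * (2 * u + 1)) (n : ℕ) (w : ℤ) :
    ∃ k, (2 ^ n : ℤ) ∣ (fun x => f.eval x)^[k] 0 - w := by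
  have sep : ∀ (n k : ℕ) (x y u : ℤ), x = y + 2 ^ n * (2 * u + 1) →
      ∃ v, (fun x => f.eval x)^[k] x = (fun x => f.eval x)^[k] y + 2 ^ n * (2 * v + 1) := by
    intro n k x y u h
    induction k with
    | zero => exact ⟨u, h⟩
    | succ k ih =>
      obtain ⟨v, hv⟩ := ih
      rw [Function.iterate_succ_apply', Function.iterate_succ_apply']
      exact separation f hder h0 h1 n _ _ v hv
  induction n with
  | zero => exact ⟨0, by simp⟩
  | succ n ih =>
    obtain ⟨k, r, hr⟩ := ih
    rcases Int.even_or_odd' r with ⟨s, rfl | rfl⟩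
    · exact ⟨k, s, by rw [hr]; ring⟩
    · obtain ⟨u, hu⟩ := hg n
      obtain ⟨v, hv⟩ := sep n k ((fun x => f.eval x)^[2 ^ n] 0) 0 u (by rw [hu, zero_add])
      refine ⟨k + 2 ^ n, s + v + 1, ?_⟩
      rw [Function.iterate_add_apply, hv]
      linear_combination hr

lemma all_hit_ge (f : ℤ[X])
    (hg : ∀ n, ∃ u : ℤ, (fun x => f.eval x)^[2 ^ n] 0 = 2 ^ n * (2 * u + 1))
    (n k j : ℕ) : (2 ^ n : ℤ) ∣ (fun x => f.eval x)^[k + 2 ^ n * j] 0 - (fun x => f.eval x)^[k] 0 := by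
  induction j with
  | zero => simp
  | succ j ih =>
    obtain ⟨u, hu⟩ := hg n
    have := iter_congr f (2 ^ n) ((fun x => f.eval x)^[2 ^ n] 0) 0 ⟨2 * u + 1, by rw [hu]; ring⟩
      (k + 2 ^ n * j)
    rw [← Function.iterate_add_apply] at this
    have := dvd_add this ih
    rw [sub_add_sub_cancel] at this
    rwa [mul_add, mul_one, ← add_assoc]

lemma padic_iter_congr (f : ℤ[X]) (N a b : ℤ_[2]) (h : N ∣ a - b) (k : ℕ) :
    N ∣ (fun w : ℤ_[2] => aeval w f)^[k] a - (fun w : ℤ_[2] => aeval w f)^[k] b := by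
  induction k with
  | zero => simpa using h
  | succ k ih =>
    rw [Function.iterate_succ_apply', Function.iterate_succ_apply']
    refine ih.trans ?_
    simp only [aeval_def, ← eval_map]
    exact sub_dvd_eval_sub _ _ _

lemma padic_iter_int (f : ℤ[X]) (x : ℤ) (k : ℕ) :
    (fun w : ℤ_[2] => aeval w f)^[k] (x : ℤ_[2]) = (((fun x => f.eval x)^[k] x : ℤ) : ℤ_[2]) := by
  induction k with
  | zero => simp
  | succ k ih =>
    rw [Function.iterate_succ_apply', Function.iterate_succ_apply', ih]
    have := aeval_algebraMap_apply_eq_algebraMap_eval (A := ℤ_[2]) ((fun x => f.eval x)^[k] x) f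
    simpa using this

lemma dense_of_hit (f : ℤ[X])
    (hg : ∀ n, ∃ u : ℤ, (fun x => f.eval x)^[2 ^ n] 0 = 2 ^ n * (2 * u + 1))
    (hit : ∀ (n : ℕ) (w : ℤ), ∃ k, (2 ^ n : ℤ) ∣ (fun x => f.eval x)^[k] 0 - w) (z : ℤ_[2]) :
    Dense (Set.range fun k : ℕ => (fun w : ℤ_[2] => aeval w f)^[k] z) := by
  have cast_dvd : ∀ (n : ℕ) (a b : ℤ), (2 ^ n : ℤ) ∣ a - b → (2 ^ n : ℤ_[2]) ∣ (a : ℤ_[2]) - b := by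
    rintro n a b ⟨k, hk⟩
    exact ⟨k, by rw [← Int.cast_sub, hk]; push_cast; ring⟩
  have appr : ∀ (n : ℕ) (x : ℤ_[2]), (2 ^ n : ℤ_[2]) ∣ x - ((x.appr n : ℤ) : ℤ_[2]) := by
    intro n x
    have := PadicInt.appr_spec n x
    rw [Ideal.mem_span_singleton] at this
    simpa using this
  rw [Metric.dense_iff]
  intro w ε hε
  obtain ⟨n, hn⟩ := exists_pow_lt_of_lt_one hε (show (1 / 2 : ℝ) < 1 by norm_num)
  obtain ⟨j, hj⟩ := hit n (z.appr n)
  obtain ⟨k, hk⟩ := hit n (w.appr n)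
  have hge := all_hit_ge f hg n k j
  obtain ⟨m, hm⟩ : ∃ m, k + 2 ^ n * j = m + j := by
    have : j ≤ 2 ^ n * j := Nat.le_mul_of_pos_left _ (by positivity)
    exact ⟨k + 2 ^ n * j - j, by omega⟩
  rw [hm, Function.iterate_add_apply] at hge
  have e1 : (2 ^ n : ℤ_[2]) ∣ z - (((fun x => f.eval x)^[j] 0 : ℤ) : ℤ_[2]) := by
    have := dvd_sub (appr n z) (cast_dvd n _ _ hj)
    refine this.trans (dvd_of_eq ?_)
    abel
  have e2 := padic_iter_congr f _ _ _ e1 m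
  rw [padic_iter_int] at e2
  have e3 := dvd_add (cast_dvd n _ _ hge) (cast_dvd n _ _ hk)
  have e4 : (2 ^ n : ℤ_[2]) ∣ (fun w : ℤ_[2] => aeval w f)^[m] z - w := by
    have := dvd_sub (dvd_add e2 e3) (appr n w)
    refine this.trans (dvd_of_eq ?_)
    abel
  refine ⟨_, ?_, ⟨m, rfl⟩⟩
  rw [Metric.mem_ball, dist_eq_norm]
  refine lt_of_le_of_lt ?_ hn
  have := (PadicInt.norm_le_pow_iff_mem_span_pow (p := 2)
    ((fun w : ℤ_[2] => aeval w f)^[m] z - w) n).2 (by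
      rw [Ideal.mem_span_singleton]; exact_mod_cast e4)
  refine this.trans (le_of_eq ?_)
  rw [zpow_neg, zpow_natCast, one_div, inv_pow]
  norm_num

lemma hit_of_dense (f : ℤ[X])
    (h : Dense (Set.range fun k : ℕ => (fun w : ℤ_[2] => aeval w f)^[k] 0)) (w : ℤ) :
    ∃ k, (8 : ℤ) ∣ (fun x => f.eval x)^[k] 0 - w := by
  obtain ⟨y, ⟨k, rfl⟩, hk⟩ := h.exists_dist_lt (w : ℤ_[2]) (show (0 : ℝ) < (2 : ℝ) ^ (-(3 : ℕ) : ℤ) by positivity)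
  refine ⟨k, ?_⟩
  have e := padic_iter_int f 0 k
  rw [Int.cast_zero] at e
  rw [dist_comm, dist_eq_norm] at hk
  simp only [e] at hk
  rw [← Int.cast_sub] at hk
  have := (PadicInt.norm_int_le_pow_iff_dvd (p := 2) (n := 3)).1 (by exact_mod_cast hk.le)
  norm_num at this
  exact this

/-- The dynamical system `(ℤ₂, F)`, where `F : ℤ₂ → ℤ₂` is the evaluation map of
`f = a₀ + a₁ X + ⋯ + a_t X^t ∈ ℤ[X]` on the `2`-adic integers, is minimal (every forward
orbit is dense) if and only if `a₀ ≡ 1 (mod 2)`, `a₁ ≡ 1 (mod 2)`,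
`a₃ + a₅ + ⋯ ≡ 2 a₂ (mod 4)`, and `a₄ + a₆ + ⋯ ≡ a₁ + a₂ - 1 (mod 4)`. -/
theorem minimal_iff_larin_conditions (f : ℤ[X]) :
    (∀ z : ℤ_[2], Dense (Set.range fun k : ℕ => (fun w : ℤ_[2] => aeval w f)^[k] z)) ↔
      (f.coeff 0 ≡ 1 [ZMOD 2] ∧
       f.coeff 1 ≡ 1 [ZMOD 2] ∧
       oddCoeffSum f ≡ 2 * f.coeff 2 [ZMOD 4] ∧
       evenCoeffSumFour f ≡ f.coeff 1 + f.coeff 2 - 1 [ZMOD 4]) := by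
  obtain ⟨E, O, hO, hE, hev, hodd⟩ := eval_mod8_s16 f
  rw [hO, hE]
  set c : ℕ → ℤ := fun k => (fun x => f.eval x)^[k] 0 with hcdef
  have c0 : c 0 = 0 := rfl
  have cs : ∀ k, c (k + 1) = f.eval (c k) := fun k => Function.iterate_succ_apply' _ _ _
  have c1 : c 1 = f.coeff 0 := by
    rw [cs 0, c0, coeff_zero_eq_eval_zero]
  have core : f.coeff 0 % 2 = 1 → ((c 2 % 4 = 2 ∧ c 4 % 8 = 4) ↔
     (f.coeff 1 % 2 = 1 ∧ (O - 2 * f.coeff 2) % 4 = 0 ∧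
      (E - (f.coeff 1 + f.coeff 2 - 1)) % 4 = 0)) := by
    intro h0
    have hp : f.coeff 0 = 2 * (f.coeff 0 / 2) + 1 := by omega
    refine arith_core (f.coeff 0) _ _ _ _ (c 1) _ (c 3) _ c1 ⟨_, hp⟩ ?_ ?_ ?_
    · have := hodd (f.coeff 0 / 2)
      rwa [← hp, ← c1, ← cs 1, c1] at this
    · intro y hy
      have := hev y
      rwa [← hy, ← cs 2] at this
    · rintro ⟨p, hp⟩
      have := hodd p
      rwa [← hp, ← cs 3] at this
  constructor
  · intro h
    have hit := hit_of_dense f (h 0)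
    obtain ⟨H1, H2, H4⟩ := forward_core c c0 (by
      intro N m j hN k
      have := iter_congr f N _ _ hN k
      simp only [hcdef, ← Function.iterate_add_apply] at this
      rwa [add_comm k m, add_comm k j] at this) hit
    rw [c1] at H1
    obtain ⟨q1, q2, q3⟩ := (core H1).1 ⟨H2, H4⟩
    simp only [Int.ModEq]
    omega
  · rintro ⟨q0, q1, q2, q3⟩
    simp only [Int.ModEq] at q0 q1 q2 q3
    obtain ⟨H2, H4⟩ := (core (by omega)).2 (by omega)
    have hf0 : f.eval 0 % 2 = 1 := by rw [← coeff_zero_eq_eval_zero]; omega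
    have hf1 := hodd 0
    have hf3 := hodd 1
    norm_num at hf1 hf3
    have hf1e : f.eval 1 % 2 = 0 := by omega
    have hd0 : (derivative f).eval 0 % 2 = 1 := by
      rw [← coeff_zero_eq_eval_zero, coeff_derivative]
      norm_num
      omega
    have hd1 : (derivative f).eval 1 % 2 = 1 := by
      obtain ⟨k, hk⟩ := binomExpansion f 1 2
      norm_num at hk
      omega
    have hder : ∀ x, (derivative f).eval x % 2 = 1 := by
      intro x
      rcases Int.emod_two_eq_zero_or_one x with hx | hx
      · have := (show (2 : ℤ) ∣ x - 0 by omega).trans (sub_dvd_eval_sub x 0 (derivative f))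
        omega
      · have := (show (2 : ℤ) ∣ x - 1 by omega).trans (sub_dvd_eval_sub x 1 (derivative f))
        omega
    have hg : ∀ n, ∃ u : ℤ, (fun x => f.eval x)^[2 ^ n] 0 = 2 ^ n * (2 * u + 1) := by
      intro n
      rw [← compPow_eval]
      refine compPow_zero f hder ?_ ?_ ?_ n
      · exact hf0
      · rw [compPow_eval]; exact H2
      · rw [compPow_eval]; exact H4
    exact dense_of_hit f hg (all_hit f hder hf0 hf1e hg)
end
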